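/- Let ρ1 and ρ2 be existential rules and Ia ⊆ Ib interpretations such that Ib is obtained by applying ρ1 for match h1 extended to h1' and Ia is obtained by applying ρ2 for match h2 extended to h2'. Let hA be an alternative match of h2' and ρ2 on Ib that is not an alternative match of h2 and ρ2 on Ĩb = Ib ∖ h1'(head(ρ1)). Then there exist partitions head(ρ2) = H2 ∪ H̄2 and head(ρ1) = H1 ∪ H̄1 with H2 nonempty such that hA(h2'(H2)) = h1'(H1) and hA(h2'(H̄2)) ⊆ Ĩb. -/

import Mathlib

/-! Common formalization of existential rules, homomorphisms, substitutions,
unifiers, rule applications, positive reliances and restraints. -/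

/-- Terms: variables, constants, labelled nulls (each indexed by a natural number). -/
inductive Term where
  | var : ℕ → Term
  | const : ℕ → Term
  | null : ℕ → Term
deriving DecidableEq

namespace Term
def isVar : Term → Prop | var _ => True | _ => False
def isConst : Term → Prop | const _ => True | _ => False
def isNull : Term → Prop | null _ => True | _ => False
end Term

/-- An atom is a predicate name applied to a list of terms (arity = list length). -/
structure Atom where
  pred : ℕ
  args : List Term
deriving DecidableEq

/-- Applying a function on terms to an atom, term-wise. -/
def Atom.map (f : Term → Term) (a : Atom) : Atom := ⟨a.pred, a.args.map f⟩

/-- Applying a function on terms to a set of atoms. -/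
def mapSet (f : Term → Term) (A : Set Atom) : Set Atom := (Atom.map f) '' A

/-- The terms occurring in a set of atoms. -/
def termsOf (A : Set Atom) : Set Term := {t | ∃ a ∈ A, t ∈ a.args}

/-- An interpretation is a set of atoms containing no variables. -/
def Interp (I : Set Atom) : Prop := ∀ t ∈ termsOf I, ¬ t.isVar

/-- A homomorphism from the atom set `A` to `I`: it fixes all constants and maps
every atom of `A` into `I`. -/
def isHom (h : Term → Term) (A I : Set Atom) : Prop :=
  (∀ c : ℕ, h (.const c) = .const c) ∧ ∀ a ∈ A, a.map h ∈ I

/-- A strong homomorphism additionally reflects atoms (over the terms of `A`). -/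
def isStrongHom (h : Term → Term) (A I : Set Atom) : Prop :=
  isHom h A I ∧ ∀ a : Atom, (∀ t ∈ a.args, t ∈ termsOf A) → a.map h ∈ I → a ∈ A

/-- A substitution fixes all constants and nulls. -/
def isSubst (θ : Term → Term) : Prop :=
  (∀ c : ℕ, θ (.const c) = .const c) ∧ (∀ n : ℕ, θ (.null n) = .null n)

/-- Atom mappings are partial functions on atoms. -/
def amDom (m : Atom → Option Atom) : Set Atom := {a | (m a).isSome}
def amRan (m : Atom → Option Atom) : Set Atom := {b | ∃ a, m a = some b}
def amAtoms (m : Atom → Option Atom) : Set Atom := amDom m ∪ amRan m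

/-- θ is a unifier for the atom mapping m. -/
def isUnifier (θ : Term → Term) (m : Atom → Option Atom) : Prop :=
  isSubst θ ∧ ∀ a b : Atom, m a = some b → a.map θ = b.map θ

/-- μ is a most general unifier for m. -/
def isMGU (μ : Term → Term) (m : Atom → Option Atom) : Prop :=
  isUnifier μ m ∧ ∀ ν, isUnifier ν m → ∃ σ, isSubst σ ∧ ∀ t, σ (μ t) = ν t

/-- An existential rule, given by its body and head (finite sets of atoms).
The universally quantified variables are those occurring in the body;
the existentially quantified ones are the head variables not occurring in the body. -/
structure Rule where
  body : Finset Atom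
  head : Finset Atom

/-- The variables occurring in a set of atoms. -/
def varsOf (A : Set Atom) : Set Term := {t ∈ termsOf A | t.isVar}

def Rule.uvars (ρ : Rule) : Set Term := varsOf ↑ρ.body
def Rule.evars (ρ : Rule) : Set Term := varsOf ↑ρ.head \ varsOf ↑ρ.body
def Rule.frontier (ρ : Rule) : Set Term := varsOf ↑ρ.body ∩ varsOf ↑ρ.head
def Rule.terms (ρ : Rule) : Set Term := termsOf ((↑ρ.body : Set Atom) ∪ ↑ρ.head)

/-- Rules contain no nulls (their atoms use only constants and variables). -/
def Rule.wf (ρ : Rule) : Prop := ∀ t ∈ ρ.terms, ¬ t.isNull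

/-- A match of ρ in I is a homomorphism from its body to I. -/
def isMatch (h : Term → Term) (ρ : Rule) (I : Set Atom) : Prop := isHom h ↑ρ.body I

/-- A match is satisfied if some homomorphism from the head to I agrees with it
on all frontier variables. -/
def satisfiedMatch (h : Term → Term) (ρ : Rule) (I : Set Atom) : Prop :=
  ∃ h', isHom h' ↑ρ.head I ∧ ∀ y ∈ ρ.frontier, h' y = h y

/-- h' extends the match h of ρ on I by mapping the existential variables to
distinct nulls not occurring in I. -/
def extendsMatch (ρ : Rule) (I : Set Atom) (h h' : Term → Term) : Prop :=
  (∀ t, t ∉ ρ.evars → h' t = h t) ∧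
  (∀ z ∈ ρ.evars, ∃ n : ℕ, h' z = .null n ∧ Term.null n ∉ termsOf I) ∧
  (∀ z₁ ∈ ρ.evars, ∀ z₂ ∈ ρ.evars, h' z₁ = h' z₂ → z₁ = z₂)

/-- J is obtained from the interpretation I by applying ρ for the (unsatisfied)
match h extended to h'. -/
def obtainedBy (ρ : Rule) (I : Set Atom) (h h' : Term → Term) (J : Set Atom) : Prop :=
  Interp I ∧ isMatch h ρ I ∧ ¬ satisfiedMatch h ρ I ∧ extendsMatch ρ I h h' ∧
  J = I ∪ mapSet h' ↑ρ.head

/-- The witnesses for ρ₂ positively relying on ρ₁ (Definition 1). -/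
def posReliesVia (ρ₁ ρ₂ : Rule) (Ia Ib : Set Atom) (h₁ h₁' h₂ : Term → Term) : Prop :=
  Ia ⊆ Ib ∧ obtainedBy ρ₁ Ia h₁ h₁' Ib ∧
  isMatch h₂ ρ₂ Ib ∧ ¬ satisfiedMatch h₂ ρ₂ Ib ∧ ¬ isMatch h₂ ρ₂ Ia

/-- ρ₂ positively relies on ρ₁, written ρ₁ ≺⁺ ρ₂. -/
def posRelies (ρ₁ ρ₂ : Rule) : Prop :=
  ∃ Ia Ib h₁ h₁' h₂, posReliesVia ρ₁ ρ₂ Ia Ib h₁ h₁' h₂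

/-- hA is an alternative match of the match h (extended to h') of ρ on Ib (Definition 2). -/
def isAltMatch (ρ : Rule) (h h' : Term → Term) (Ib : Set Atom) (hA : Term → Term) : Prop :=
  isHom hA (mapSet h' ↑ρ.head) Ib ∧
  (∀ t ∈ termsOf (mapSet h ↑ρ.body), hA t = t) ∧
  ∃ n : ℕ, Term.null n ∈ termsOf (mapSet h' ↑ρ.head) ∧
    Term.null n ∉ termsOf (mapSet hA (mapSet h' ↑ρ.head))

/-- The witnesses for ρ₁ restraining ρ₂ (Definition 3). -/
def restrainsVia (ρ₁ ρ₂ : Rule) (Ia Ib : Set Atom)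
    (h₁ h₁' h₂ h₂' hA : Term → Term) : Prop :=
  ∃ Ja Jb : Set Atom, Ia ⊆ Ib ∧
    obtainedBy ρ₁ Jb h₁ h₁' Ib ∧ obtainedBy ρ₂ Ja h₂ h₂' Ia ∧
    isAltMatch ρ₂ h₂ h₂' Ib hA ∧
    ¬ isAltMatch ρ₂ h₂ h₂' (Ib \ mapSet h₁' ↑ρ₁.head) hA

/-- ρ₁ restrains ρ₂, written ρ₁ ≺□ ρ₂. -/
def restrains (ρ₁ ρ₂ : Rule) : Prop :=
  ∃ Ia Ib h₁ h₁' h₂ h₂' hA, restrainsVia ρ₁ ρ₂ Ia Ib h₁ h₁' h₂ h₂' hA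

/-- The fixed substitution ω: it maps each variable of Vex to a null and each
variable of Vall to a constant, injectively, fixing everything else, and its
values on Vall ∪ Vex avoid the terms in `fresh`. -/
def isOmega (ω : Term → Term) (Vall Vex : Set Term) (fresh : Set Term) : Prop :=
  isSubst ω ∧
  (∀ v ∈ Vex, (ω v).isNull) ∧
  (∀ v ∈ Vall, (ω v).isConst) ∧
  (∀ t, t ∉ Vall ∪ Vex → ω t = t) ∧
  (∀ u ∈ Vall ∪ Vex, ∀ v ∈ Vall ∪ Vex, ω u = ω v → u = v) ∧
  (∀ v ∈ Vall ∪ Vex, ω v ∉ fresh)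

/-- For a substitution θ, `away θ S` is the substitution that agrees with θ
outside of S and is the identity on S.  Thus θ∀ = `away θ Vex` and
θ∃ = `away θ Vall`. -/
noncomputable def away (θ : Term → Term) (S : Set Term) : Term → Term :=
  fun t => @ite _ (t ∈ S) (Classical.propDecidable _) t (θ t)

/-- I ⊨ ∃ Z. ψ : there is a homomorphism ψ → I mapping every term of ψ other
than the (existential) variables in Z to itself. -/
def models (I : Set Atom) (ψ : Set Atom) (Z : Set Term) : Prop :=
  ∃ h : Term → Term, (∀ a ∈ ψ, a.map h ∈ I) ∧ ∀ t ∈ termsOf ψ, t ∉ Z → h t = t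

/-- No null occurs in the atom set A. -/
def noNullsIn (A : Set Atom) : Prop := ∀ t ∈ termsOf A, ¬ t.isNull

/-- if hA is an alternative match of h₂' and ρ₂ on Ib that is not
an alternative match on Ĩb = Ib ∖ h₁'(head(ρ₁)), then head(ρ₂) and head(ρ₁) can
be partitioned as H₂ ∪ H̄₂ and H₁ ∪ H̄₁ with H₂ nonempty,
hA(h₂'(H₂)) = h₁'(H₁) and hA(h₂'(H̄₂)) ⊆ Ĩb. -/
theorem alt_match_partition
    (ρ₁ ρ₂ : Rule) (hwf₁ : ρ₁.wf) (hwf₂ : ρ₂.wf)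
    (Ia Ib Ja Jb : Set Atom) (h₁ h₁' h₂ h₂' hA : Term → Term)
    (hsub : Ia ⊆ Ib)
    (hb : obtainedBy ρ₁ Jb h₁ h₁' Ib)
    (ha : obtainedBy ρ₂ Ja h₂ h₂' Ia)
    (halt : isAltMatch ρ₂ h₂ h₂' Ib hA)
    (hnalt : ¬ isAltMatch ρ₂ h₂ h₂' (Ib \ mapSet h₁' ↑ρ₁.head) hA) :
    ∃ H₂ H₂bar H₁ H₁bar : Set Atom,
      H₂ ∪ H₂bar = (↑ρ₂.head : Set Atom) ∧ H₂ ∩ H₂bar = ∅ ∧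
      H₁ ∪ H₁bar = (↑ρ₁.head : Set Atom) ∧ H₁ ∩ H₁bar = ∅ ∧
      H₂.Nonempty ∧
      mapSet hA (mapSet h₂' H₂) = mapSet h₁' H₁ ∧
      mapSet hA (mapSet h₂' H₂bar) ⊆ Ib \ mapSet h₁' ↑ρ₁.head := by
  obtain ⟨⟨hc, hm⟩, hfix, hn⟩ := halt
  have hex : ∃ a ∈ (↑ρ₂.head : Set Atom),
      (a.map h₂').map hA ∈ mapSet h₁' (↑ρ₁.head : Set Atom) := by
    by_contra hcon
    apply hnalt
    refine ⟨⟨hc, ?_⟩, hfix, hn⟩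
    rintro b ⟨a, ha', rfl⟩
    exact ⟨hm _ ⟨a, ha', rfl⟩, fun hx => hcon ⟨a, ha', hx⟩⟩
  let H₂ : Set Atom := {a | a ∈ (↑ρ₂.head : Set Atom) ∧
    (a.map h₂').map hA ∈ mapSet h₁' (↑ρ₁.head : Set Atom)}
  let H₁ : Set Atom := {b | b ∈ (↑ρ₁.head : Set Atom) ∧
    b.map h₁' ∈ mapSet hA (mapSet h₂' H₂)}
  refine ⟨H₂, ↑ρ₂.head \ H₂, H₁, ↑ρ₁.head \ H₁, ?_, ?_, ?_, ?_, ?_, ?_, ?_⟩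
  · exact Set.union_diff_cancel (fun a h => h.1)
  · exact Set.inter_diff_self _ _
  · exact Set.union_diff_cancel (fun a h => h.1)
  · exact Set.inter_diff_self _ _
  · obtain ⟨a, h1, h2⟩ := hex
    exact ⟨a, h1, h2⟩
  · apply Set.Subset.antisymm
    · rintro _ ⟨_, ⟨a, haH, rfl⟩, rfl⟩
      obtain ⟨b, hbm, hbe⟩ := haH.2
      refine ⟨b, ⟨hbm, ?_⟩, hbe⟩
      rw [hbe]
      exact ⟨_, ⟨a, haH, rfl⟩, rfl⟩
    · rintro _ ⟨b, hbH, rfl⟩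
      exact hbH.2
  · rintro _ ⟨_, ⟨a, haH, rfl⟩, rfl⟩
    exact ⟨hm _ ⟨a, haH.1, rfl⟩, fun hx => haH.2 ⟨haH.1, hx⟩⟩
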